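/- Define f(t) := ∑_{n=0}^∞ (B_n(t)·log(1+t) − A_n(t)) for −1 < t ≤ 1. Then f is differentiable on (−1, 1) and satisfies the linear first-order differential equation (3+2t−t²)·f′(t) + (1−t)·f(t) − 3 = 0 for all t ∈ (−1, 1). -/

import Mathlib

open Finset Set

/-- `Bₙ(t) = ∑_{k=0}^n C(n,k) C(n+k,k) t^{n−k}`. -/
noncomputable def Blog (t : ℝ) (n : ℕ) : ℝ :=
  ∑ k ∈ range (n + 1), (Nat.choose n k : ℝ) * (Nat.choose (n + k) k : ℝ) * t ^ (n - k)

/-- `cₖ(t) = ∑_{m=1}^k (−1)^{m−1} t^m/m`. -/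
noncomputable def clog (t : ℝ) (k : ℕ) : ℝ :=
  ∑ m ∈ Icc 1 k, (-1 : ℝ) ^ (m - 1) * t ^ m / m

/-- `Aₙ(t) = ∑_{k=0}^n C(n,k) C(n+k,k) t^{n−k} cₖ(t)`. -/
noncomputable def Alog (t : ℝ) (n : ℕ) : ℝ :=
  ∑ k ∈ range (n + 1),
    (Nat.choose n k : ℝ) * (Nat.choose (n + k) k : ℝ) * t ^ (n - k) * clog t k

/-- The error sum `f(t) = ∑ₙ (Bₙ(t) log(1+t) − Aₙ(t))`. -/
noncomputable def flog (t : ℝ) : ℝ :=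
  ∑' n : ℕ, (Blog t n * Real.log (1 + t) - Alog t n)

/-! The remainder `log (1 + t) - cₖ(t)` equals `∫₀¹ t (-t u)ᵏ / (1 + t u) du`, so that
`Bₙ(t) log (1 + t) - Aₙ(t) = tⁿ⁺¹ ∫₀¹ Pₙ(u) / (1 + t u) du` with `Pₙ` the shifted Legendre
polynomial. Rodrigues' formula and `n` integrations by parts turn the right-hand side into
`∫₀¹ t / (1 + t u) * rⁿ du`, where `r = t² u (1 - u) / (1 + t u)`. For `-1 < t < 3` and `u ∈ [0, 1]`
we have `0 ≤ r < 1`, and the geometric series sums to `f(t) = ∫₀¹ t / (1 + t u - t² u (1 - u)) du`.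
Completing the square in terms of `s = (t - 1) / 2` gives
`f(t) = (π / 4 + 3 / 2 * arcsin s) / √(1 - s²)`, and `y = (a + b * arcsin s) / √(1 - s²)` solves
`(1 - s²) y' = b + s y`. -/

section Analysis

open MeasureTheory intervalIntegral

section Polynomial

open Polynomial

lemma integral_iterate_derivative_mul {p : ℝ[X]} {f : ℝ → ℝ} {a b : ℝ} {n : ℕ}
    (ha : (X - C a) ^ n ∣ p) (hb : (X - C b) ^ n ∣ p) (hf : ∀ x ∈ uIcc a b, ContDiffAt ℝ n f x) :
    ∫ x in a..b, (derivative^[n] p).eval x * f x =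
      (-1) ^ n * ∫ x in a..b, p.eval x * iteratedDeriv n f x := by
  induction n generalizing f with
  | zero => simp
  | succ n ih =>
    have eval_eq_zero {c : ℝ} (hc : (X - C c) ^ (n + 1) ∣ p) : (derivative^[n] p).eval c = 0 := by
      have hdvd := pow_sub_dvd_iterate_derivative_of_pow_dvd n hc
      rwa [Nat.add_sub_cancel_left, pow_one, dvd_iff_isRoot] at hdvd
    have hderiv (x) (hx : x ∈ uIcc a b) : ContDiffAt ℝ n (deriv f) x :=
      (hf x hx).derivWithin le_rfl
    have hparts := integral_mul_deriv_eq_deriv_mul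
      (u := f) (v := fun x ↦ (derivative^[n] p).eval x)
      (fun x hx ↦ ((hf x hx).differentiableAt (by simp)).hasDerivAt)
      (fun x _ ↦ (derivative^[n] p).hasDerivAt x)
      (ContinuousOn.intervalIntegrable fun x hx ↦ (hderiv x hx).continuousAt.continuousWithinAt)
      (Continuous.intervalIntegrable (by fun_prop) a b)
    rw [eval_eq_zero ha, eval_eq_zero hb, mul_zero, mul_zero, sub_zero, zero_sub] at hparts
    calc
      _ = -∫ x in a..b, (derivative^[n] p).eval x * deriv f x := by
        simpa only [Function.iterate_succ_apply', mul_comm] using hparts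
      _ = _ := by
        rw [ih ((pow_dvd_pow _ n.le_succ).trans ha) ((pow_dvd_pow _ n.le_succ).trans hb) hderiv,
          iteratedDeriv_succ', pow_succ]
        ring

lemma aeval_shiftedLegendre {R : Type*} [CommRing R] (n : ℕ) (x : R) :
    aeval x (shiftedLegendre n) =
      ∑ k ∈ range (n + 1), (n.choose k : R) * ((n + k).choose k : R) * (-x) ^ k := by
  simp only [shiftedLegendre, map_sum]
  refine sum_congr rfl fun k _ ↦ ?_
  rw [neg_pow x, ← Nat.choose_symm_add]
  simp only [map_mul, map_pow, map_neg, map_one, map_natCast, aeval_X]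
  ring

lemma factorial_mul_integral_shiftedLegendre_mul {f : ℝ → ℝ} {n : ℕ}
    (hf : ∀ x ∈ uIcc (0 : ℝ) 1, ContDiffAt ℝ n f x) :
    n.factorial * ∫ x in (0 : ℝ)..1, aeval x (shiftedLegendre n) * f x =
      (-1) ^ n * ∫ x in (0 : ℝ)..1, (x * (1 - x)) ^ n * iteratedDeriv n f x := by
  have rodrigues (x : ℝ) : (n.factorial : ℝ) * aeval x (shiftedLegendre n) =
      (derivative^[n] (X ^ n * (1 - X) ^ n : ℝ[X])).eval x := by
    have h := congrArg (aeval x) (factorial_mul_shiftedLegendre_eq n)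
    rw [map_mul, map_natCast] at h
    rw [h, ← eval_map_algebraMap, ← iterate_derivative_map]
    simp
  have hzero : (X - C (0 : ℝ)) ^ n ∣ X ^ n * (1 - X) ^ n := by simp
  have hone : (X - C (1 : ℝ)) ^ n ∣ X ^ n * (1 - X) ^ n :=
    (pow_dvd_pow_of_dvd ⟨-1, by simp⟩ n).mul_left _
  rw [← intervalIntegral.integral_const_mul]
  simpa only [← mul_assoc, rodrigues, eval_mul, eval_pow, eval_sub, eval_X, eval_one, ← mul_pow]
    using integral_iterate_derivative_mul hzero hone hf

end Polynomial

lemma hasSum_integral_mul_pow {w r : ℝ → ℝ} {a b : ℝ} (hw : ContinuousOn w (uIcc a b))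
    (hr : ContinuousOn r (uIcc a b)) (hr_lt : ∀ x ∈ uIcc a b, |r x| < 1) :
    HasSum (fun n : ℕ ↦ ∫ x in a..b, w x * r x ^ n) (∫ x in a..b, w x * (1 - r x)⁻¹) := by
  obtain ⟨c, hc, hmax⟩ := isCompact_uIcc.exists_isMaxOn nonempty_uIcc hr.abs
  have hle (x) (hx : x ∈ uIoc a b) : |r x| ≤ |r c| := hmax (uIoc_subset_uIcc hx)
  refine hasSum_integral_of_dominated_convergence (fun n x ↦ |w x| * |r c| ^ n)
    (fun n ↦ ?_) (fun n ↦ ae_of_all _ fun x hx ↦ ?_) (ae_of_all _ fun x _ ↦ ?_) ?_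
    (ae_of_all _ fun x hx ↦ ?_)
  · exact ((hw.mul (hr.pow n)).mono uIoc_subset_uIcc).aestronglyMeasurable measurableSet_uIoc
  · rw [Real.norm_eq_abs, abs_mul, abs_pow]
    refine mul_le_mul_of_nonneg_left ?_ (abs_nonneg _)
    exact pow_le_pow_left₀ (abs_nonneg _) (hle x hx) n
  · exact (summable_geometric_of_lt_one (abs_nonneg _) (hr_lt c hc)).mul_left _
  · simp only [tsum_mul_left]
    exact (hw.abs.mul continuousOn_const).intervalIntegrable
  · exact (hasSum_geometric_of_abs_lt_one (hr_lt x (uIoc_subset_uIcc hx))).mul_left _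

end Analysis

section Trigonometry

open Real

-- Where `cos x = 0`, both sides are `0`: at `x = π / 2` this relies on division by zero.
lemma tan_pi_div_four_add_half (x : ℝ) : tan (π / 4 + x / 2) = (1 + sin x) / cos x := by
  obtain ⟨y, rfl⟩ : ∃ y, x = 2 * y - π / 2 := ⟨π / 4 + x / 2, by ring⟩
  rw [sin_sub_pi_div_two, cos_sub_pi_div_two, cos_two_mul', sin_two_mul, tan_eq_sin_div_cos,
    show π / 4 + (2 * y - π / 2) / 2 = y by ring]
  rcases eq_or_ne (sin y) 0 with hy | hy
  · simp [hy, cos_sq']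
  · rw [cos_sq', show 1 + -(1 - sin y ^ 2 - sin y ^ 2) = 2 * sin y * sin y by ring,
      mul_div_mul_left _ _ (mul_ne_zero two_ne_zero hy)]

lemma one_sub_sq_pos {s : ℝ} (hs : s ∈ Ioo (-1 : ℝ) 1) : 0 < 1 - s ^ 2 := by
  nlinarith [hs.1, hs.2]

lemma arctan_one_add_div_sqrt {s : ℝ} (hs : s ∈ Ioo (-1 : ℝ) 1) :
    arctan ((1 + s) / √(1 - s ^ 2)) = π / 4 + arcsin s / 2 := by
  have htan := tan_pi_div_four_add_half (arcsin s)
  rw [sin_arcsin hs.1.le hs.2.le, cos_arcsin] at htan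
  have hlower := neg_pi_div_two_lt_arcsin.2 hs.1
  have hupper := arcsin_lt_pi_div_two.2 hs.2
  rw [← htan, arctan_tan] <;> linarith

lemma hasDerivAt_add_mul_arcsin_div_sqrt (a b : ℝ) {s : ℝ} (hs : s ∈ Ioo (-1 : ℝ) 1) :
    HasDerivAt (fun x ↦ (a + b * arcsin x) / √(1 - x ^ 2))
      ((b + s * ((a + b * arcsin s) / √(1 - s ^ 2))) / (1 - s ^ 2)) s := by
  have hpos := one_sub_sq_pos hs
  have hsq := sq_sqrt hpos.le
  have hroot : √(1 - s ^ 2) ≠ 0 := (sqrt_pos.2 hpos).ne'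
  have hnum := ((hasDerivAt_arcsin hs.1.ne' hs.2.ne).const_mul b).const_add a
  have hden := (((hasDerivAt_id s).pow 2).const_sub 1).sqrt hpos.ne'
  refine (hnum.div hden hroot).congr_deriv ?_
  simp only [Pi.pow_apply, id_eq, Nat.add_one_sub_one, pow_one]
  field_simp
  rw [hsq]
  ring

end Trigonometry

section ErrorSum

open intervalIntegral Real

lemma one_add_mul_pos {t u : ℝ} (ht : -1 < t) (hu : u ∈ uIcc (0 : ℝ) 1) : 0 < 1 + t * u := by
  rw [Set.uIcc_of_le zero_le_one] at hu
  rcases hu.1.eq_or_lt with rfl | hu_pos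
  · simp
  · nlinarith [hu.2, mul_pos hu_pos (neg_lt_iff_pos_add.1 ht)]

lemma clog_eq_sum_range (t : ℝ) (k : ℕ) :
    clog t k = ∑ i ∈ range k, (-1) ^ i * t ^ (i + 1) / (i + 1) := by
  induction k with
  | zero => simp [clog]
  | succ k ih =>
    rw [sum_range_succ, ← ih, clog, sum_Icc_succ_top (by lia)]
    simp [clog]

lemma continuousOn_div_one_add_mul {t : ℝ} (ht : -1 < t) {g : ℝ → ℝ} (hg : Continuous g) :
    ContinuousOn (fun u ↦ g u / (1 + t * u)) (uIcc 0 1) :=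
  hg.continuousOn.div (by fun_prop) fun _ hu ↦ (one_add_mul_pos ht hu).ne'

lemma log_one_add_eq_integral {t : ℝ} (ht : -1 < t) :
    log (1 + t) = ∫ u in (0 : ℝ)..1, t / (1 + t * u) := by
  have hsubst := smul_integral_comp_mul_add (a := 0) (b := 1) (fun x : ℝ ↦ x⁻¹) t 1
  rw [mul_zero, zero_add, mul_one, add_comm t,
    integral_inv_of_pos one_pos (neg_lt_iff_pos_add'.1 ht), div_one, smul_eq_mul,
    ← intervalIntegral.integral_const_mul] at hsubst
  simpa only [add_comm, div_eq_mul_inv] using hsubst.symm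

lemma log_one_add_sub_clog {t : ℝ} (ht : -1 < t) (k : ℕ) :
    log (1 + t) - clog t k = ∫ u in (0 : ℝ)..1, t * (-(t * u)) ^ k / (1 + t * u) := by
  have hclog : clog t k = ∫ u in (0 : ℝ)..1, t * ∑ i ∈ range k, (-(t * u)) ^ i := by
    simp only [clog_eq_sum_range, mul_sum, neg_pow (t * _), mul_pow]
    rw [integral_finsetSum fun i _ ↦ Continuous.intervalIntegrable (by fun_prop) _ _]
    refine sum_congr rfl fun i _ ↦ ?_
    simp only [intervalIntegral.integral_const_mul, integral_pow, one_pow, ne_eq,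
      Nat.add_eq_zero_iff, one_ne_zero, and_false, not_false_eq_true, zero_pow, sub_zero, one_div]
    ring
  rw [log_one_add_eq_integral ht, hclog,
    ← intervalIntegral.integral_sub
      (continuousOn_div_one_add_mul ht continuous_const).intervalIntegrable
      (Continuous.intervalIntegrable (by fun_prop) _ _)]
  refine integral_congr fun u hu ↦ ?_
  have hpos := one_add_mul_pos ht hu
  have hgeom := mul_neg_geom_sum (-(t * u)) k
  rw [sub_neg_eq_add] at hgeom
  rw [div_sub' hpos.ne', ← mul_left_comm, hgeom]
  ring

lemma iteratedDeriv_inv_one_add_mul {𝕜 : Type*} [NontriviallyNormedField 𝕜] (n : ℕ) (t u : 𝕜) :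
    iteratedDeriv n (fun x ↦ (1 + t * x)⁻¹) u =
      (-1) ^ n * n.factorial * t ^ n / (1 + t * u) ^ (n + 1) := by
  simp only [iteratedDeriv_eq_iterate, add_comm (1 : 𝕜), iter_deriv_inv_linear]
  rw [show (-1 - n : ℤ) = -((n + 1 : ℕ) : ℤ) by push_cast; ring, zpow_neg, zpow_natCast,
    div_eq_mul_inv]

open Polynomial in
lemma blog_mul_log_sub_alog_eq_integral_shiftedLegendre {t : ℝ} (ht : -1 < t) (n : ℕ) :
    Blog t n * log (1 + t) - Alog t n =
      t ^ (n + 1) * ∫ u in (0 : ℝ)..1, aeval u (shiftedLegendre n) * (1 + t * u)⁻¹ := by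
  calc
    _ = ∑ k ∈ range (n + 1), (n.choose k : ℝ) * ((n + k).choose k : ℝ) * t ^ (n - k) *
          (log (1 + t) - clog t k) := by
      simp only [Blog, Alog, sum_mul, mul_sub, sum_sub_distrib]
    _ = ∫ u in (0 : ℝ)..1, ∑ k ∈ range (n + 1), (n.choose k : ℝ) * ((n + k).choose k : ℝ) *
          t ^ (n - k) * (t * (-(t * u)) ^ k / (1 + t * u)) := by
      rw [integral_finsetSum fun k _ ↦
        (continuousOn_div_one_add_mul ht (by fun_prop)).intervalIntegrable.const_mul _]
      simp only [log_one_add_sub_clog ht, intervalIntegral.integral_const_mul]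
    _ = _ := by
      rw [← intervalIntegral.integral_const_mul]
      refine integral_congr fun u _ ↦ ?_
      simp only [aeval_shiftedLegendre, sum_mul, mul_sum]
      refine sum_congr rfl fun k hk ↦ ?_
      have hpow : t ^ (n - k) * t ^ k = t ^ n := pow_sub_mul_pow t (mem_range_succ_iff.1 hk)
      rw [pow_succ, ← hpow, ← mul_neg, mul_pow]
      ring

lemma blog_mul_log_sub_alog_eq_integral {t : ℝ} (ht : -1 < t) (n : ℕ) :
    Blog t n * log (1 + t) - Alog t n =
      ∫ u in (0 : ℝ)..1, t / (1 + t * u) * (t ^ 2 * (u * (1 - u)) / (1 + t * u)) ^ n := by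
  have hsmooth (u) (hu : u ∈ uIcc (0 : ℝ) 1) : ContDiffAt ℝ n (fun x ↦ (1 + t * x)⁻¹) u :=
    ContDiffAt.inv (by fun_prop) (one_add_mul_pos ht hu).ne'
  have hfact : (n.factorial : ℝ) ≠ 0 := by positivity
  refine mul_left_cancel₀ hfact ?_
  rw [blog_mul_log_sub_alog_eq_integral_shiftedLegendre ht, mul_left_comm,
    factorial_mul_integral_shiftedLegendre_mul hsmooth]
  simp only [← intervalIntegral.integral_const_mul, iteratedDeriv_inv_one_add_mul]
  refine integral_congr fun u _ ↦ ?_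
  have hsign : (-1 : ℝ) ^ n * (-1) ^ n = 1 := by rw [← mul_pow]; simp
  calc
    _ = (-1) ^ n * (-1) ^ n * (n.factorial * (t ^ (2 * n + 1) * (u * (1 - u)) ^ n /
          (1 + t * u) ^ (n + 1))) := by ring
    _ = _ := by
      rw [hsign]
      simp only [div_pow, mul_pow, ← pow_mul]
      field_simp
      ring

lemma one_add_mul_sub_eq_add_sq (t u : ℝ) :
    1 + t * u - t ^ 2 * (u * (1 - u)) = 1 - ((t - 1) / 2) ^ 2 + (t * u - (t - 1) / 2) ^ 2 := by
  ring

lemma sub_one_div_two_mem_Ioo {t : ℝ} (ht : t ∈ Ioo (-1 : ℝ) 3) : (t - 1) / 2 ∈ Ioo (-1 : ℝ) 1 :=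
  ⟨by linarith [ht.1], by linarith [ht.2]⟩

lemma hasSum_blog_mul_log_sub_alog {t : ℝ} (ht : t ∈ Ioo (-1 : ℝ) 3) :
    HasSum (fun n ↦ Blog t n * log (1 + t) - Alog t n)
      (∫ u in (0 : ℝ)..1, t / (1 + t * u - t ^ 2 * (u * (1 - u)))) := by
  have hpos {u : ℝ} (hu : u ∈ uIcc (0 : ℝ) 1) := one_add_mul_pos ht.1 hu
  have hlt (u) (hu : u ∈ uIcc (0 : ℝ) 1) : |t ^ 2 * (u * (1 - u)) / (1 + t * u)| < 1 := by
    have hs := one_sub_sq_pos (sub_one_div_two_mem_Ioo ht)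
    have hu' := Set.uIcc_of_le (zero_le_one' ℝ) ▸ hu
    have hnonneg : 0 ≤ u * (1 - u) := mul_nonneg hu'.1 (sub_nonneg.2 hu'.2)
    rw [abs_of_nonneg (div_nonneg (by positivity) (hpos hu).le), div_lt_one (hpos hu)]
    linarith [one_add_mul_sub_eq_add_sq t u, sq_nonneg (t * u - (t - 1) / 2)]
  have hsum := hasSum_integral_mul_pow
    (continuousOn_div_one_add_mul ht.1 (continuous_const (y := t)))
    (continuousOn_div_one_add_mul ht.1 (by fun_prop)) hlt
  simp only [← blog_mul_log_sub_alog_eq_integral ht.1] at hsum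
  convert! hsum using 1
  refine integral_congr fun u hu ↦ ?_
  rw [one_sub_div (hpos hu).ne', inv_div, div_mul_div_cancel₀ (hpos hu).ne']

lemma integral_div_one_add_mul_sub {t : ℝ} (ht : t ∈ Ioo (-1 : ℝ) 3) :
    ∫ u in (0 : ℝ)..1, t / (1 + t * u - t ^ 2 * (u * (1 - u))) =
      (π / 4 + 3 / 2 * arcsin ((t - 1) / 2)) / √(1 - ((t - 1) / 2) ^ 2) := by
  have hs := sub_one_div_two_mem_Ioo ht
  have hpos := one_sub_sq_pos hs
  simp only [one_add_mul_sub_eq_add_sq t]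
  set s := (t - 1) / 2 with hs_def
  calc
    _ = ∫ x in -s..1 + s, (√(1 - s ^ 2) ^ 2 + x ^ 2)⁻¹ := by
      rw [sq_sqrt hpos.le]
      have hsubst := smul_integral_comp_mul_add (a := 0) (b := 1)
        (fun x ↦ (1 - s ^ 2 + x ^ 2)⁻¹) t (-s)
      rw [smul_eq_mul, ← intervalIntegral.integral_const_mul, mul_zero, zero_add,
        show t * 1 + -s = 1 + s by rw [hs_def]; ring] at hsubst
      simpa only [div_eq_mul_inv, sub_eq_add_neg] using hsubst
    _ = (√(1 - s ^ 2))⁻¹ * (π / 4 + arcsin s / 2 + arcsin s) := by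
      rw [integral_inv_sq_add_sq (sqrt_pos.2 hpos).ne', neg_div, arctan_neg, sub_neg_eq_add,
        arctan_one_add_div_sqrt hs, ← arcsin_eq_arctan hs]
    _ = _ := by ring

lemma flog_eq {t : ℝ} (ht : t ∈ Ioo (-1 : ℝ) 3) :
    flog t = (π / 4 + 3 / 2 * arcsin ((t - 1) / 2)) / √(1 - ((t - 1) / 2) ^ 2) :=
  (hasSum_blog_mul_log_sub_alog ht).tsum_eq.trans (integral_div_one_add_mul_sub ht)

lemma hasDerivAt_flog {t : ℝ} (ht : t ∈ Ioo (-1 : ℝ) 3) :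
    HasDerivAt flog ((3 - (1 - t) * flog t) / (3 + 2 * t - t ^ 2)) t := by
  have hs := sub_one_div_two_mem_Ioo ht
  have hne := (one_sub_sq_pos hs).ne'
  have haffine : HasDerivAt (fun x : ℝ ↦ (x - 1) / 2) (1 / 2) t :=
    ((hasDerivAt_id t).sub_const 1).div_const 2
  have hderiv := (hasDerivAt_add_mul_arcsin_div_sqrt (π / 4) (3 / 2) hs).comp t haffine
  have hflog : flog =ᶠ[nhds t]
      (fun s ↦ (π / 4 + 3 / 2 * arcsin s) / √(1 - s ^ 2)) ∘ fun x ↦ (x - 1) / 2 :=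
    Filter.eventually_of_mem (isOpen_Ioo.mem_nhds ht) fun _ ↦ flog_eq
  refine (hderiv.congr_of_eventuallyEq hflog).congr_deriv ?_
  rw [← flog_eq ht, show 3 + 2 * t - t ^ 2 = 4 * (1 - ((t - 1) / 2) ^ 2) by ring]
  field_simp [hne]
  ring

end ErrorSum

theorem error_sum_log_ode_general :
    ∀ t ∈ Ioo (-1 : ℝ) 3,
      Summable (fun n ↦ Blog t n * Real.log (1 + t) - Alog t n) ∧
      DifferentiableAt ℝ flog t ∧
      (3 + 2 * t - t ^ 2) * deriv flog t + (1 - t) * flog t - 3 = 0 := by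
  intro t ht
  have hderiv := hasDerivAt_flog ht
  have hne : 3 + 2 * t - t ^ 2 ≠ 0 := by nlinarith [ht.1, ht.2]
  refine ⟨(hasSum_blog_mul_log_sub_alog ht).summable, hderiv.differentiableAt, ?_⟩
  rw [hderiv.deriv, mul_div_cancel₀ _ hne]
  ring

/-- **A differential equation for the error sum of `log(1+t)`.**
The function `f(t) = ∑ₙ (Bₙ(t) log(1+t) − Aₙ(t))` is differentiable on `(−1,1)` and
satisfies `(3+2t−t²) f′(t) + (1−t) f(t) − 3 = 0` there. -/
theorem error_sum_log_ode :
    ∀ t ∈ Ioo (-1 : ℝ) 1,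
      DifferentiableAt ℝ flog t ∧
      (3 + 2 * t - t ^ 2) * deriv flog t + (1 - t) * flog t - 3 = 0 :=
  fun t ht ↦ (error_sum_log_ode_general t ⟨ht.1, ht.2.trans (by norm_num)⟩).2
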